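/- Let X be a two-dimensional real Banach space and let Y be a real Banach space of dimension at least two. Let T : X → Y be a bounded linear operator such that the norm attainment set M_T, viewed as a topological subspace of the unit sphere of X, has more than two connected components. Then T does not satisfy the Bhatia–Šemrl property; that is, there exists a bounded linear operator A : X → Y with T ⊥_B A such that Tx is not Birkhoff–James orthogonal to Ax for any x ∈ M_T. -/

import Mathlib

/-!
Write `M` for the norm attainment set, and let `u` be a unit vector outside `M` (if there is none,
`M` is the unit circle, which is connected). Complete `u` to a basis `(e, u)` of the plane. Every
point of `M` has a nonzero `e`-coordinate, so `M = σ(K) ∪ -σ(K)`, where `σ t` is the normalisation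
of `e + t u` and `K = {t | σ t ∈ M}`. If `K` were an interval, `M` would have at most two
components (`card_components_le_two`); so there are `s < t < r` with `s, r ∈ K` and `t ∉ K`.

Put `v = e + t u`, so that `‖T v‖ < ‖T‖ ‖v‖`. Let `g` be a supporting functional of the norm at `v`,
and choose `w ∈ ker g` whose coordinate along `w` in the basis `(v, w)` is the functional
`ψ(a e + b u) = b - t a`. For every `x` of norm one, `x - ψ(x) w = α v` with `|α| ‖v‖ = |g x| ≤ 1`,
whence `‖T x - ψ(x) T w‖ < ‖T‖`. The operator is `A x = φ(x) T w`, with `φ` the `e`-coordinate.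
For `x ∈ M`, `φ(x) ≠ 0`, so the last inequality says that `T x` is not orthogonal to `A x`. By
convexity of the norm, `‖T x + lam A x‖ ≥ ‖T‖` for `x ∈ M` as soon as `lam φ(x) ψ(x) ≥ 0`. Since
`φ ψ` is negative at `σ s` and positive at `σ r`, this covers every real `lam`.
-/

/-- Birkhoff–James orthogonality: `x ⊥_B y` iff `‖x + λ y‖ ≥ ‖x‖` for all real `λ`. -/
def BJOrth {E : Type*} [NormedAddCommGroup E] [NormedSpace ℝ E] (x y : E) : Prop :=
  ∀ lam : ℝ, ‖x‖ ≤ ‖x + lam • y‖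

/-- The norm attainment set of a bounded linear operator. -/
def normAttainSet {X Y : Type*} [NormedAddCommGroup X] [NormedSpace ℝ X]
    [NormedAddCommGroup Y] [NormedSpace ℝ Y] (T : X →L[ℝ] Y) : Set X :=
  {x | ‖x‖ = 1 ∧ ‖T x‖ = ‖T‖}

/-- If `M = -M` is covered by a curve `σ` and its negative, and `σ` meets `M` exactly on an interval
of parameters, then `M` has at most two connected components: it is the union of two preconnected
sets, `σ` of the interval and its negative. -/
lemma card_components_le_two {X : Type*} [NormedAddCommGroup X] (M : Set X)
    (σ : ℝ → X) (hσ : Continuous σ) (hneg : ∀ x ∈ M, -x ∈ M)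
    (hcov : ∀ x ∈ M, ∃ t, x = σ t ∨ x = -σ t)
    (hK : IsPreconnected {t | σ t ∈ M}) :
    Cardinal.mk (ConnectedComponents ↥M) ≤ 2 := by
  by_cases hne : ∃ k, σ k ∈ M
  swap
  · have : IsEmpty ↥M := by
      refine ⟨fun x => hne ?_⟩
      obtain ⟨t, h | h⟩ := hcov x x.2
      · exact ⟨t, h ▸ x.2⟩
      · refine ⟨t, ?_⟩
        have := hneg _ x.2
        rwa [h, neg_neg] at this
    have : IsEmpty (ConnectedComponents ↥M) :=
      ⟨fun c => by obtain ⟨x, -⟩ := ConnectedComponents.surjective_coe c; exact this.elim x⟩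
    simp
  obtain ⟨k, hk⟩ := hne
  have : PreconnectedSpace ↥{t | σ t ∈ M} := isPreconnected_iff_preconnectedSpace.mp hK
  let F : ↥{t | σ t ∈ M} → ↥M := fun t => ⟨σ t, t.2⟩
  let G : ↥{t | σ t ∈ M} → ↥M := fun t => ⟨-σ t, hneg _ t.2⟩
  have hF : Continuous F := (hσ.comp continuous_subtype_val).subtype_mk _
  have hG : Continuous G := (hσ.comp continuous_subtype_val).neg.subtype_mk _
  -- A continuous image of a preconnected space in the totally disconnected space of components
  -- is a single point.
  have hFs := (isPreconnected_range (ConnectedComponents.continuous_coe.comp hF)).subsingleton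
  have hGs := (isPreconnected_range (ConnectedComponents.continuous_coe.comp hG)).subsingleton
  let f : Bool → ConnectedComponents ↥M := fun b => bif b then (F ⟨k, hk⟩ : ↥M) else (G ⟨k, hk⟩ : ↥M)
  have hf : Function.Surjective f := by
    intro c
    obtain ⟨x, rfl⟩ := ConnectedComponents.surjective_coe c
    obtain ⟨t, h | h⟩ := hcov x x.2
    · have ht : σ t ∈ M := h ▸ x.2
      refine ⟨true, ?_⟩
      have hx : x = F ⟨t, ht⟩ := Subtype.ext h
      rw [hx]
      exact hFs ⟨_, rfl⟩ ⟨_, rfl⟩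
    · have ht : σ t ∈ M := by
        have := hneg _ x.2
        rwa [h, neg_neg] at this
      refine ⟨false, ?_⟩
      have hx : x = G ⟨t, ht⟩ := Subtype.ext h
      rw [hx]
      exact hGs ⟨_, rfl⟩ ⟨_, rfl⟩
  have := Cardinal.mk_le_of_surjective (f := fun b : ULift Bool => f b.down)
    (fun c => (hf c).imp' ULift.up fun _ h => h)
  simpa using this

/-- Convexity of the norm along a line: if it does not exceed `‖p‖` at parameter `-c < 0`, then it
is at least `‖p‖` at every parameter `m ≥ 0`. -/
lemma norm_le_of_opposite {Y : Type*} [NormedAddCommGroup Y] [NormedSpace ℝ Y] (p w : Y)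
    {c m : ℝ} (hc : 0 < c) (hm : 0 ≤ m) (h : ‖p - c • w‖ ≤ ‖p‖) : ‖p‖ ≤ ‖p + m • w‖ := by
  have e : (m + c) • p = m • (p - c • w) + c • (p + m • w) := by module
  have h1 : ‖(m + c) • p‖ ≤ m * ‖p - c • w‖ + c * ‖p + m • w‖ := by
    rw [e]
    refine (norm_add_le _ _).trans ?_
    rw [norm_smul, norm_smul, Real.norm_of_nonneg hm, Real.norm_of_nonneg hc.le]
  rw [norm_smul, Real.norm_of_nonneg (by positivity)] at h1
  have h2 := mul_le_mul_of_nonneg_left h hm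
  have h3 : c * ‖p‖ ≤ c * ‖p + m • w‖ := by linarith
  exact le_of_mul_le_mul_left h3 hc

/-- If `X` is a two-dimensional real Banach space, `Y` a real Banach space of
dimension at least two, and `T : X → Y` is a bounded linear operator whose norm attainment
set has more than two connected components (as a subspace of `X`), then `T` does not satisfy
the Bhatia–Šemrl property. -/
theorem stmt0 {X Y : Type*} [NormedAddCommGroup X] [NormedSpace ℝ X] [CompleteSpace X]
    [NormedAddCommGroup Y] [NormedSpace ℝ Y] [CompleteSpace Y]
    (hX : Module.finrank ℝ X = 2) (hY : 2 ≤ Module.rank ℝ Y)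
    (T : X →L[ℝ] Y)
    (hcomp : 2 < Cardinal.mk (ConnectedComponents ↥(normAttainSet T))) :
    ∃ A : X →L[ℝ] Y, (∀ lam : ℝ, ‖T‖ ≤ ‖T + lam • A‖) ∧
      ∀ x ∈ normAttainSet T, ¬ BJOrth (T x) (A x) := by
  have hfd : FiniteDimensional ℝ X := Module.finite_of_finrank_pos (by omega)
  have hneg : ∀ x ∈ normAttainSet T, -x ∈ normAttainSet T := by
    rintro x ⟨h1, h2⟩
    exact ⟨by simpa using h1, by simpa using h2⟩
  obtain ⟨u, hu1, hu⟩ : ∃ u : X, ‖u‖ = 1 ∧ u ∉ normAttainSet T := by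
    by_contra! hall
    have hM : normAttainSet T = Metric.sphere (0 : X) 1 := by
      ext x
      simpa using ⟨fun h => h.1, fun h => hall x h⟩
    have hrank : 1 < Module.rank ℝ X := by
      rw [← Module.finrank_eq_rank, hX]
      norm_num
    have hpre : IsPreconnected (normAttainSet T) := hM ▸ isPreconnected_sphere hrank 0 1
    have : PreconnectedSpace ↥(normAttainSet T) := isPreconnected_iff_preconnectedSpace.mp hpre
    have h1 : Cardinal.mk (ConnectedComponents ↥(normAttainSet T)) ≤ 1 :=
      Cardinal.le_one_iff_subsingleton.mpr inferInstance
    exact absurd (hcomp.trans_le h1) (by norm_num)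
  have hu0 : u ≠ 0 := by
    rintro rfl
    simp at hu1
  obtain ⟨e, he⟩ := exists_linearIndependent_pair_of_one_lt_finrank (R := ℝ) (by omega) hu0
  let B := basisOfLinearIndependentOfCardEqFinrank he (by simp [hX])
  have hB0 : B 0 = u := by simp [B]
  have hB1 : B 1 = e := by simp [B]
  let φ : X →L[ℝ] ℝ := LinearMap.toContinuousLinearMap (B.coord 1)
  let β : X →L[ℝ] ℝ := LinearMap.toContinuousLinearMap (B.coord 0)
  have hrep : ∀ x, x = φ x • e + β x • u := by
    intro x
    have := B.sum_repr x
    rw [Fin.sum_univ_two, hB0, hB1] at this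
    rw [add_comm]
    exact this.symm
  have hφe : φ e = 1 := by simp [φ, ← hB1]
  have hφu : φ u = 0 := by simp [φ, ← hB0]
  have hβe : β e = 0 := by simp [β, ← hB1]
  have hβu : β u = 1 := by simp [β, ← hB0]
  have hφM : ∀ x ∈ normAttainSet T, φ x ≠ 0 := by
    rintro x ⟨h1, h2⟩ h0
    have hx := hrep x
    rw [h0, zero_smul, zero_add] at hx
    have hb : ‖β x‖ = 1 := by
      rw [hx, norm_smul, hu1, mul_one] at h1
      exact h1
    apply hu
    refine ⟨hu1, ?_⟩
    rw [hx, map_smul, norm_smul, hb, one_mul] at h2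
    exact h2
  have hpt : ∀ t : ℝ, e + t • u ≠ 0 := by
    intro t h
    have := congrArg φ h
    simp [hφe, hφu] at this
  have hpos : ∀ t : ℝ, 0 < ‖e + t • u‖ := fun t => norm_pos_iff.mpr (hpt t)
  let σ : ℝ → X := fun t => ‖e + t • u‖⁻¹ • (e + t • u)
  have hσc : Continuous σ := by
    have h : Continuous fun t : ℝ => e + t • u := by fun_prop
    exact (h.norm.inv₀ fun t => (hpos t).ne').smul h
  have hcov : ∀ x ∈ normAttainSet T, ∃ t, x = σ t ∨ x = -σ t := by
    intro x hx
    have h0 := hφM x hx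
    refine ⟨β x / φ x, ?_⟩
    have hxe : x = φ x • (e + (β x / φ x) • u) := by
      rw [smul_add, smul_smul, mul_div_cancel₀ _ h0]
      exact hrep x
    have hn : |φ x| * ‖e + (β x / φ x) • u‖ = 1 := by
      rw [← Real.norm_eq_abs, ← norm_smul, ← hxe]
      exact hx.1
    have hi : |φ x| = ‖e + (β x / φ x) • u‖⁻¹ := eq_inv_of_mul_eq_one_left hn
    rcases abs_choice (φ x) with h | h
    · left
      simp only [σ]
      rw [← hi, h]
      exact hxe
    · right
      simp only [σ]
      rw [← hi, h, neg_smul, neg_neg]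
      exact hxe
  obtain ⟨s, r, t, hs, hr, ht, hst, htr⟩ : ∃ s r t : ℝ, σ s ∈ normAttainSet T ∧
      σ r ∈ normAttainSet T ∧ σ t ∉ normAttainSet T ∧ s < t ∧ t < r := by
    by_contra! hno
    refine absurd hcomp (not_lt.mpr (card_components_le_two _ σ hσc hneg hcov ?_))
    refine Set.OrdConnected.isPreconnected ⟨fun s hs r hr t ⟨h1, h2⟩ => ?_⟩
    by_contra ht
    have hst : s < t := lt_of_le_of_ne h1 (by rintro rfl; exact ht hs)
    have htr : t ≠ r := by rintro rfl; exact ht hr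
    exact htr (le_antisymm h2 (hno s r t hs hr ht hst))
  set v := e + t • u with hv
  have hv0 : 0 < ‖v‖ := hpos t
  have hTv : ‖T v‖ < ‖T‖ * ‖v‖ := by
    refine lt_of_le_of_ne (T.le_opNorm v) fun h => ht ?_
    refine ⟨?_, ?_⟩
    · simp only [σ]
      rw [← hv, norm_smul, norm_inv, norm_norm, inv_mul_cancel₀ hv0.ne']
    · simp only [σ]
      rw [← hv, map_smul, norm_smul, norm_inv, norm_norm, h]
      field_simp
  have hT0 : 0 < ‖T‖ := by
    by_contra! h
    nlinarith [norm_nonneg (T v)]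
  obtain ⟨g, hg1, hgv⟩ := exists_dual_vector ℝ v (by exact hv0.ne')
  replace hgv : g v = ‖v‖ := by simpa using hgv
  -- The multiple of `v` is chosen to make `g w = 0`.
  let w := u - (g u / ‖v‖) • v
  have hgw : g w = 0 := by
    simp only [w, map_sub, map_smul, smul_eq_mul, hgv]
    field_simp
    ring
  let ψ : X →L[ℝ] ℝ := β - t • φ
  have hψ : ∀ x, ψ x = β x - t * φ x := fun x => by simp [ψ]
  have hkey : ∀ x, ‖x‖ = 1 → ‖T x - ψ x • T w‖ < ‖T‖ := by
    intro x hx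
    obtain ⟨α, hα⟩ : ∃ α : ℝ, x = ψ x • w + α • v := by
      refine ⟨φ x + ψ x * (g u / ‖v‖), ?_⟩
      have h : x = ψ x • u + φ x • v := by
        rw [hψ, hv]
        nth_rewrite 1 [hrep x]
        module
      nth_rewrite 1 [h]
      simp only [w]
      module
    have hgx : g x = α * ‖v‖ := by
      rw [hα]
      simp [hgw, hgv]
    have hle : |α| * ‖v‖ ≤ 1 := by
      have := g.le_opNorm x
      rw [hg1, hx, hgx, Real.norm_eq_abs, abs_mul, abs_norm] at this
      linarith
    have hTx : T x - ψ x • T w = α • T v := by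
      nth_rewrite 1 [hα]
      simp
    rw [hTx, norm_smul, Real.norm_eq_abs]
    rcases (abs_nonneg α).eq_or_lt with h | h
    · rw [← h, zero_mul]
      exact hT0
    · calc |α| * ‖T v‖ < |α| * (‖T‖ * ‖v‖) := mul_lt_mul_of_pos_left hTv h
        _ = ‖T‖ * (|α| * ‖v‖) := by ring
        _ ≤ ‖T‖ * 1 := by gcongr
        _ = ‖T‖ := mul_one _
  have hφσ : ∀ k, φ (σ k) = ‖e + k • u‖⁻¹ := fun k => by simp [σ, hφe, hφu]
  have hψσ : ∀ k, ψ (σ k) = ‖e + k • u‖⁻¹ * (k - t) := fun k => by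
    rw [hψ, hφσ]
    simp only [σ, map_smul, map_add, hβe, hβu, smul_eq_mul]
    ring
  refine ⟨φ.smulRight (T w), fun lam => ?_, fun x hx horth => ?_⟩
  · have hbound : ∀ x ∈ normAttainSet T, ‖T‖ ≤ ‖T x + (lam * φ x) • T w‖ →
        ‖T‖ ≤ ‖T + lam • φ.smulRight (T w)‖ := by
      rintro x ⟨h1, -⟩ h
      have := (T + lam • φ.smulRight (T w)).le_opNorm x
      rw [h1, mul_one] at this
      refine h.trans (le_trans (le_of_eq ?_) this)
      simp [smul_smul]
    rcases le_total 0 lam with hl | hl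
    · apply hbound _ hr
      have hc : 0 < ψ (σ r) := by
        rw [hψσ]
        exact mul_pos (inv_pos.mpr (hpos r)) (by linarith)
      have hm : 0 ≤ lam * φ (σ r) := by
        rw [hφσ]
        exact mul_nonneg hl (inv_nonneg.mpr (hpos r).le)
      have := norm_le_of_opposite (T (σ r)) (T w) hc hm (by rw [hr.2]; exact (hkey _ hr.1).le)
      rwa [hr.2] at this
    · apply hbound _ hs
      have hc : 0 < -ψ (σ s) := by
        rw [hψσ, ← mul_neg]
        exact mul_pos (inv_pos.mpr (hpos s)) (by linarith)
      have hm : 0 ≤ -(lam * φ (σ s)) := by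
        rw [hφσ, ← neg_mul]
        exact mul_nonneg (by linarith) (inv_nonneg.mpr (hpos s).le)
      have := norm_le_of_opposite (T (σ s)) (-T w) hc hm (by
        rw [hs.2, neg_smul_neg]; exact (hkey _ hs.1).le)
      rwa [hs.2, neg_smul_neg] at this
  · have h := horth (-(ψ x / φ x))
    have h2 : T x + (-(ψ x / φ x)) • (φ.smulRight (T w)) x = T x - ψ x • T w := by
      rw [ContinuousLinearMap.smulRight_apply, smul_smul, neg_mul, div_mul_cancel₀ _ (hφM x hx),
        neg_smul, sub_eq_add_neg]
    rw [h2, hx.2] at h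
    exact absurd (hkey x hx.1) (not_lt.mpr h)
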